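/- Let v_1, ..., v_6 be six vectors in R^2 such that every two are linearly independent and such that no line through the origin has exactly one of the vectors strictly on one side. Then there are at least 3 distinct unordered partitions {S, S^c} of {v_1, ..., v_6} into two sets of size 3 each realized as the two sides of some line through the origin (with no vector on the line). -/

import Mathlib

/-!
Write `d i l = det (v i, v l)`, which is antisymmetric and nonzero off the diagonal. The line spanned
by `v i` has normal `n i = (-(v i).2, (v i).1)`, whose value on `v l` is `d i l`. Tilting `n i`
slightly towards `v i` or towards `-v i` gives two lines avoiding all the vectors, whose positive
sides differ only by the element `i`. One of the two positive sides has odd size; the sizes 1 and 5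
are excluded by hypothesis (for 5, use the opposite normal), so its size is 3. Thus every `i` yields
a (3,3)-separation `{B, Bᶜ}` which off `i` is the sign pattern of `d i`.

At most two indices yield the same separation: if `l ↦ ε i * d i l` has the signs `σ` of `B` off `i`,
and similarly for `j`, then antisymmetry of `d` forces `ε i * σ i = -(ε j * σ j)`, and three signs
cannot be pairwise opposite. Hence the six indices yield at least three separations. Representing
each by its side containing `0` makes complementary pairs impossible.
-/

/-- The normal of the line through `v i` can be tilted so that `v i` lies on a prescribed side (the
sign of `c`), the other vectors staying on the sides given by the determinants. -/
lemma exists_tilt (v : Fin 6 → ℝ × ℝ) (i : Fin 6) (hi : v i ≠ 0) (c : ℝ) :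
    ∃ w : ℝ × ℝ, (0 < c → 0 < w.1 * (v i).1 + w.2 * (v i).2) ∧
      (c < 0 → w.1 * (v i).1 + w.2 * (v i).2 < 0) ∧
      ∀ l, (0 < (v i).1 * (v l).2 - (v i).2 * (v l).1 → 0 < w.1 * (v l).1 + w.2 * (v l).2) ∧
        ((v i).1 * (v l).2 - (v i).2 * (v l).1 < 0 → w.1 * (v l).1 + w.2 * (v l).2 < 0) := by
  have key : ∀ l, ∀ᶠ t in nhdsWithin (0 : ℝ) (Set.Ioi 0),
      (0 < (v i).1 * (v l).2 - (v i).2 * (v l).1 →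
        0 < (-(v i).2 + t * c * (v i).1) * (v l).1 + ((v i).1 + t * c * (v i).2) * (v l).2) ∧
      ((v i).1 * (v l).2 - (v i).2 * (v l).1 < 0 →
        (-(v i).2 + t * c * (v i).1) * (v l).1 + ((v i).1 + t * c * (v i).2) * (v l).2 < 0) := by
    intro l
    have hc : Filter.Tendsto (fun t : ℝ => (-(v i).2 + t * c * (v i).1) * (v l).1
        + ((v i).1 + t * c * (v i).2) * (v l).2) (nhdsWithin (0 : ℝ) (Set.Ioi 0))
        (nhds ((v i).1 * (v l).2 - (v i).2 * (v l).1)) := by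
      have h : Continuous (fun t : ℝ => (-(v i).2 + t * c * (v i).1) * (v l).1
        + ((v i).1 + t * c * (v i).2) * (v l).2) := by fun_prop
      have h0 := (h.tendsto 0).mono_left (nhdsWithin_le_nhds (s := Set.Ioi 0))
      convert h0 using 2
      ring
    refine Filter.Eventually.and ?_ ?_
    · by_cases h : 0 < (v i).1 * (v l).2 - (v i).2 * (v l).1
      · filter_upwards [hc.eventually (lt_mem_nhds h)] with t ht _ using ht
      · exact Filter.Eventually.of_forall fun t h' => absurd h' h
    · by_cases h : (v i).1 * (v l).2 - (v i).2 * (v l).1 < 0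
      · filter_upwards [hc.eventually (gt_mem_nhds h)] with t ht _ using ht
      · exact Filter.Eventually.of_forall fun t h' => absurd h' h
  obtain ⟨t, ht, ht0⟩ := ((Filter.eventually_all.2 key).and self_mem_nhdsWithin).exists
  have ht0 : 0 < t := ht0
  have hn : 0 < (v i).1 * (v i).1 + (v i).2 * (v i).2 := by
    by_contra! h
    apply hi
    ext
    · exact mul_self_eq_zero.1 (by
        nlinarith [mul_self_nonneg (v i).1, mul_self_nonneg (v i).2])
    · exact mul_self_eq_zero.1 (by
        nlinarith [mul_self_nonneg (v i).1, mul_self_nonneg (v i).2])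
  have e : (-(v i).2 + t * c * (v i).1) * (v i).1 + ((v i).1 + t * c * (v i).2) * (v i).2
      = t * ((v i).1 * (v i).1 + (v i).2 * (v i).2) * c := by ring
  refine ⟨(-(v i).2 + t * c * (v i).1, (v i).1 + t * c * (v i).2), fun h => ?_, fun h => ?_, ht⟩
  · rw [e]; positivity
  · rw [e]; exact mul_neg_of_pos_of_neg (by positivity) h

/-- Every index `i` yields a (3,3)-separation, with side `B` containing `0`, that off `i` agrees up
to a global sign `s` with the signs of `det (v i, v l)`. -/
lemma exists_separation (v : Fin 6 → ℝ × ℝ) (i : Fin 6) (hi : v i ≠ 0)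
    (hd : ∀ l, l ≠ i → (v i).1 * (v l).2 - (v i).2 * (v l).1 ≠ 0)
    (hconv : ¬ ∃ w : ℝ × ℝ, w ≠ 0 ∧
      (Finset.univ.filter fun i => 0 < w.1 * (v i).1 + w.2 * (v i).2).card = 1) :
    ∃ B : Finset (Fin 6), 0 ∈ B ∧ B.card = 3 ∧
      (∃ w : ℝ × ℝ, (∀ i ∈ B, 0 < w.1 * (v i).1 + w.2 * (v i).2) ∧
          (∀ i ∉ B, w.1 * (v i).1 + w.2 * (v i).2 < 0)) ∧
      ∃ s : Prop, ∀ l, l ≠ i → (0 < (v i).1 * (v l).2 - (v i).2 * (v l).1 ↔ (l ∈ B ↔ s)) := by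
  -- Passing to the complement if necessary, it suffices to find a side that may miss `0`.
  suffices h : ∃ A : Finset (Fin 6), A.card = 3 ∧
      (∃ w : ℝ × ℝ, (∀ i ∈ A, 0 < w.1 * (v i).1 + w.2 * (v i).2) ∧
          (∀ i ∉ A, w.1 * (v i).1 + w.2 * (v i).2 < 0)) ∧
      ∀ l, l ≠ i → (0 < (v i).1 * (v l).2 - (v i).2 * (v l).1 ↔ l ∈ A) by
    obtain ⟨A, hA, ⟨w, hw1, hw2⟩, hl⟩ := h
    by_cases h0 : 0 ∈ A
    · exact ⟨A, h0, hA, ⟨w, hw1, hw2⟩, True, by simpa using hl⟩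
    · refine ⟨Aᶜ, by simpa using h0, by rw [Finset.card_compl, hA]; rfl,
        ⟨(-w.1, -w.2), fun l hl => ?_, fun l hl => ?_⟩, False, by simpa using hl⟩
      · have := hw2 l (by simpa using hl)
        simp only; linarith
      · have := hw1 l (by simpa using hl)
        simp only; linarith
  -- A line avoiding all the vectors has neither 1 nor 5 of them on its positive side.
  have gen : ∀ w : ℝ × ℝ, (∀ l, w.1 * (v l).1 + w.2 * (v l).2 ≠ 0) →
      (Finset.univ.filter fun l => 0 < w.1 * (v l).1 + w.2 * (v l).2).card ≠ 1 ∧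
      (Finset.univ.filter fun l => 0 < w.1 * (v l).1 + w.2 * (v l).2).card ≠ 5 := by
    intro w hw
    have w0 : w ≠ 0 := by rintro rfl; simpa using hw 0
    refine ⟨fun h => hconv ⟨w, w0, h⟩, fun h => hconv ⟨-w, neg_ne_zero.2 w0, ?_⟩⟩
    have e : (Finset.univ.filter fun l => 0 < (-w).1 * (v l).1 + (-w).2 * (v l).2)
        = (Finset.univ.filter fun l => 0 < w.1 * (v l).1 + w.2 * (v l).2)ᶜ := by
      ext l
      simp only [Finset.mem_filter, Finset.mem_univ, true_and, Finset.mem_compl, not_lt,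
        Prod.fst_neg, Prod.snd_neg]
      have := hw l
      constructor
      · intro h; linarith
      · intro h; have := lt_of_le_of_ne h this; linarith
    rw [e, Finset.card_compl, h]; rfl
  obtain ⟨p, hp, -, hpl⟩ := exists_tilt v i hi 1
  obtain ⟨q, -, hq, hql⟩ := exists_tilt v i hi (-1)
  replace hp := hp (by norm_num)
  replace hq := hq (by norm_num)
  have hp0 : ∀ l, p.1 * (v l).1 + p.2 * (v l).2 ≠ 0 := by
    intro l
    by_cases h : l = i
    · subst h; exact hp.ne'
    · rcases lt_or_gt_of_ne (hd l h) with h | h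
      · exact ((hpl l).2 h).ne
      · exact ((hpl l).1 h).ne'
  have hq0 : ∀ l, q.1 * (v l).1 + q.2 * (v l).2 ≠ 0 := by
    intro l
    by_cases h : l = i
    · subst h; exact hq.ne
    · rcases lt_or_gt_of_ne (hd l h) with h | h
      · exact ((hql l).2 h).ne
      · exact ((hql l).1 h).ne'
  have hps : ∀ l, l ≠ i → (0 < (v i).1 * (v l).2 - (v i).2 * (v l).1 ↔
      0 < p.1 * (v l).1 + p.2 * (v l).2) := fun l h => ⟨(hpl l).1, fun h' => by
    by_contra h2
    exact lt_asymm h' ((hpl l).2 (lt_of_le_of_ne (not_lt.1 h2) (hd l h)))⟩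
  have hqs : ∀ l, l ≠ i → (0 < (v i).1 * (v l).2 - (v i).2 * (v l).1 ↔
      0 < q.1 * (v l).1 + q.2 * (v l).2) := fun l h => ⟨(hql l).1, fun h' => by
    by_contra h2
    exact lt_asymm h' ((hql l).2 (lt_of_le_of_ne (not_lt.1 h2) (hd l h)))⟩
  have hiq : i ∉ Finset.univ.filter fun l => 0 < q.1 * (v l).1 + q.2 * (v l).2 := by
    simpa using hq.le
  have e : (Finset.univ.filter fun l => 0 < p.1 * (v l).1 + p.2 * (v l).2)
      = insert i (Finset.univ.filter fun l => 0 < q.1 * (v l).1 + q.2 * (v l).2) := by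
    ext l
    by_cases h : l = i
    · subst h; simpa using hp
    · simp [h, ← hps l h, ← hqs l h]
  have hc := congrArg Finset.card e
  rw [Finset.card_insert_of_notMem hiq] at hc
  have hle : (Finset.univ.filter fun l => 0 < p.1 * (v l).1 + p.2 * (v l).2).card ≤ 6 :=
    Finset.card_le_univ _
  obtain ⟨p1, p5⟩ := gen p hp0
  obtain ⟨q1, q5⟩ := gen q hq0
  have : (Finset.univ.filter fun l => 0 < p.1 * (v l).1 + p.2 * (v l).2).card = 3 ∨
      (Finset.univ.filter fun l => 0 < q.1 * (v l).1 + q.2 * (v l).2).card = 3 := by omega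
  rcases this with h | h
  · refine ⟨_, h, ⟨p, fun l hl => by simpa using hl, fun l hl => ?_⟩, by simpa using hps⟩
    exact lt_of_le_of_ne (by simpa using hl) (hp0 l)
  · refine ⟨_, h, ⟨q, fun l hl => by simpa using hl, fun l hl => ?_⟩, by simpa using hqs⟩
    exact lt_of_le_of_ne (by simpa using hl) (hq0 l)

/-- Six pairwise independent vectors in ℝ² such that no origin line has exactly one of them
strictly on one side admit at least 3 distinct unordered (3,3)-partitions realized by
origin lines. -/
theorem three_proper_separations (v : Fin 6 → ℝ × ℝ)
    (hv : ∀ i j : Fin 6, i ≠ j → LinearIndependent ℝ ![v i, v j])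
    (hconv : ¬ ∃ w : ℝ × ℝ, w ≠ 0 ∧
      (Finset.univ.filter fun i => 0 < w.1 * (v i).1 + w.2 * (v i).2).card = 1) :
    ∃ S : Finset (Finset (Fin 6)), 3 ≤ S.card ∧
      (∀ A ∈ S, A.card = 3 ∧
        ∃ w : ℝ × ℝ, (∀ i ∈ A, 0 < w.1 * (v i).1 + w.2 * (v i).2) ∧
          (∀ i ∉ A, w.1 * (v i).1 + w.2 * (v i).2 < 0)) ∧
      (∀ A ∈ S, ∀ B ∈ S, A ≠ B → Aᶜ ≠ B) := by
  have hv0 : ∀ i, v i ≠ 0 := by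
    intro i
    obtain ⟨j, hj⟩ := exists_ne i
    simpa using (hv i j hj.symm).ne_zero 0
  have hd : ∀ i l, l ≠ i → (v i).1 * (v l).2 - (v i).2 * (v l).1 ≠ 0 := by
    intro i l hl h0
    have hp := LinearIndependent.pair_iff.1 (hv i l hl.symm)
    have h1 := hp (v l).1 (-(v i).1) (by ext <;> simp <;> linarith)
    have h2 := hp (v l).2 (-(v i).2) (by ext <;> simp <;> linarith)
    exact hv0 l (Prod.ext h1.1 h2.1)
  choose B hB0 hB3 hBw s hs using fun i => exists_separation v i (hv0 i) (hd i) hconv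
  have anti : ∀ i j, i ≠ j → (0 < (v i).1 * (v j).2 - (v i).2 * (v j).1 ↔
      ¬ 0 < (v j).1 * (v i).2 - (v j).2 * (v i).1) := by
    intro i j hij
    have := hd i j hij.symm
    constructor
    · intro h h'; linarith
    · intro h; exact lt_of_le_of_ne (by linarith) this.symm
  -- The signs `i ∈ B i ↔ s i` are opposite for distinct indices with the same separation.
  have opp : ∀ i j, i ≠ j → B i = B j → ((i ∈ B i ↔ s i) ↔ ¬ (j ∈ B j ↔ s j)) := by
    intro i j hij hB
    have h1 := hs i j hij.symm
    have h2 := hs j i hij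
    have h3 := anti i j hij
    rw [hB] at h1 ⊢
    tauto
  refine ⟨Finset.univ.image B, ?_, ?_, ?_⟩
  · have h := Finset.card_le_mul_card_image (f := B) Finset.univ 2 (fun a _ => by
      by_contra! h
      obtain ⟨i, j, k, hi, hj, hk, hij, hik, hjk⟩ := Finset.two_lt_card_iff.1 h
      simp only [Finset.mem_filter, Finset.mem_univ, true_and] at hi hj hk
      have h1 := opp i j hij (hi.trans hj.symm)
      have h2 := opp i k hik (hi.trans hk.symm)
      have h3 := opp j k hjk (hj.trans hk.symm)
      clear hs anti opp
      tauto)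
    rw [Finset.card_univ, Fintype.card_fin] at h
    omega
  · intro A hA
    obtain ⟨i, -, rfl⟩ := Finset.mem_image.1 hA
    exact ⟨hB3 i, hBw i⟩
  · intro A hA A' hA' _ h
    obtain ⟨i, -, rfl⟩ := Finset.mem_image.1 hA
    obtain ⟨j, -, rfl⟩ := Finset.mem_image.1 hA'
    have := hB0 j
    rw [← h] at this
    exact Finset.mem_compl.1 this (hB0 i)
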